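/- Terms and abstractions are interpretable in any semantic domain: there exist functions sem : term → val → Dt and semAbs : abs → val → Da such that for all good terms and abstractions and good inputs of domain cardinality < |var|: sem (Var xs x) ρ = ρ xs x; sem (Op δ inp binp) ρ = op δ (↑(λX. sem X ρ) inp) (↑(λA. semAbs A ρ) binp); semAbs (Abs xs x X) ρ = abs xs (λd. sem X (ρ[(xs,x) ← d])). Moreover: sem (X[Y/y]_ys) ρ = sem X (ρ[(ys,y) ← sem Y ρ]) for all good terms X, Y; and if fresh xs x X, then for all valuations ρ, ρ' that agree everywhere except possibly at (xs,x), sem X ρ = sem X ρ'. -/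

import Mathlib

open scoped Classical

universe u

section Binding

variable (var varsort index bindex opsym : Type u)

/-! ### Inputs -/

/-- An `(α,β)`-input: a partial function from `α` to `β`. -/
abbrev Input (α β : Type u) : Type u := α → Option β

/-- The domain of an input. -/
def idom {α β : Type u} (inp : Input α β) : Set α := {a | inp a ≠ none}

/-- The componentwise lifting of a predicate to inputs. -/
def liftP {α β : Type u} (P : β → Prop) (inp : Input α β) : Prop :=
  ∀ a b, inp a = some b → P b

/-- The componentwise lifting of a function to inputs. -/
def liftF {α β γ : Type u} (f : β → γ) (inp : Input α β) : Input α γ :=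
  fun a => (inp a).map f

/-- An input is small if its domain has cardinality smaller than that of `var`. -/
def smallDom {α β : Type u} (inp : Input α β) : Prop :=
  Cardinal.mk (idom inp) < Cardinal.mk var

/-! ### Quasiterms -/

mutual
/-- Quasiterms: raw terms before quotienting by alpha-equivalence. -/
inductive QTerm : Type u where
  | qVar : varsort → var → QTerm
  | qOp : opsym → (index → Option QTerm) → (bindex → Option QAbs) → QTerm
/-- Quasiabstractions. -/
inductive QAbs : Type u where
  | qAbs : varsort → var → QTerm → QAbs
end

/-- Transposition of two variables. -/
noncomputable def swapVar (z1 z2 x : var) : var :=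
  if x = z1 then z2 else if x = z2 then z1 else x

/-- Sort-aware transposition of variables (acts only on variables of varsort `zs`). -/
noncomputable def swapVarS (zs xs : varsort) (z1 z2 x : var) : var :=
  if xs = zs then swapVar var z1 z2 x else x

variable {var varsort index bindex opsym}

/-- Swapping of the variables `z1`, `z2` at varsort `zs` in a quasiterm
(transposing them everywhere, including binding positions). -/
noncomputable def qSwap (z1 z2 : var) (zs : varsort) :
    QTerm var varsort index bindex opsym → QTerm var varsort index bindex opsym :=
  QTerm.rec (motive_1 := fun _ => QTerm var varsort index bindex opsym)
    (motive_2 := fun _ => QAbs var varsort index bindex opsym)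
    (motive_3 := fun _ => Option (QTerm var varsort index bindex opsym))
    (motive_4 := fun _ => Option (QAbs var varsort index bindex opsym))
    (fun xs x => .qVar xs (swapVarS var varsort zs xs z1 z2 x))
    (fun d _ _ rinp rbinp => .qOp d rinp rbinp)
    (fun xs x _ rX => .qAbs xs (swapVarS var varsort zs xs z1 z2 x) rX)
    none (fun _ r => some r) none (fun _ r => some r)

/-- Swapping of variables in a quasiabstraction. -/
noncomputable def qSwapAbs (z1 z2 : var) (zs : varsort) :
    QAbs var varsort index bindex opsym → QAbs var varsort index bindex opsym
  | .qAbs xs x X => .qAbs xs (swapVarS var varsort zs xs z1 z2 x) (qSwap z1 z2 zs X)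

/-! ### Freshness and goodness -/

mutual
/-- `QFresh ys y X`: the variable `y` of varsort `ys` has no free occurrence in `X`. -/
inductive QFresh : varsort → var → QTerm var varsort index bindex opsym → Prop where
  | qVar : ∀ {ys y xs x}, (ys, y) ≠ (xs, x) → QFresh ys y (.qVar xs x)
  | qOp : ∀ {ys y d inp binp}, (∀ i X, inp i = some X → QFresh ys y X) →
      (∀ j A, binp j = some A → QFreshAbs ys y A) → QFresh ys y (.qOp d inp binp)
/-- Freshness for quasiabstractions. -/
inductive QFreshAbs : varsort → var → QAbs var varsort index bindex opsym → Prop where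
  | qAbs_bound : ∀ {xs x X}, QFreshAbs xs x (.qAbs xs x X)
  | qAbs_body : ∀ {ys y xs x X}, QFresh ys y X → QFreshAbs ys y (.qAbs xs x X)
end

mutual
/-- Good quasiterms: all constructors branch less than `|var|`. -/
inductive QGood : QTerm var varsort index bindex opsym → Prop where
  | qVar : ∀ {xs x}, QGood (.qVar xs x)
  | qOp : ∀ {d inp binp}, (∀ i X, inp i = some X → QGood X) →
      (∀ j A, binp j = some A → QGoodAbs A) →
      smallDom var inp → smallDom var binp → QGood (.qOp d inp binp)
/-- Good quasiabstractions. -/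
inductive QGoodAbs : QAbs var varsort index bindex opsym → Prop where
  | qAbs : ∀ {xs x X}, QGood X → QGoodAbs (.qAbs xs x X)
end

/-! ### Alpha-equivalence -/

mutual
/-- Alpha-equivalence of quasiterms. -/
inductive Alpha : QTerm var varsort index bindex opsym →
    QTerm var varsort index bindex opsym → Prop where
  | qVar : ∀ {xs x}, Alpha (.qVar xs x) (.qVar xs x)
  | qOp : ∀ {d inp binp inp' binp'},
      (∀ i, inp i = none ↔ inp' i = none) →
      (∀ i X X', inp i = some X → inp' i = some X' → Alpha X X') →
      (∀ j, binp j = none ↔ binp' j = none) →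
      (∀ j A A', binp j = some A → binp' j = some A' → AlphaAbs A A') →
      Alpha (.qOp d inp binp) (.qOp d inp' binp')
/-- Alpha-equivalence of quasiabstractions (the exists-fresh formulation). -/
inductive AlphaAbs : QAbs var varsort index bindex opsym →
    QAbs var varsort index bindex opsym → Prop where
  | qAbs : ∀ {xs x x' X X' y}, y ∉ ({x, x'} : Set var) →
      QFresh xs y X → QFresh xs y X' →
      Alpha (qSwap y x xs X) (qSwap y x' xs X') →
      AlphaAbs (.qAbs xs x X) (.qAbs xs x' X')
end

/-! ### Terms and abstractions as quotients -/

variable (var varsort index bindex opsym)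

/-- Terms: quasiterms modulo alpha-equivalence. -/
def Term : Type u := Quot (@Alpha var varsort index bindex opsym)

/-- Abstractions: quasiabstractions modulo alpha-equivalence. -/
def Abstr : Type u := Quot (@AlphaAbs var varsort index bindex opsym)

variable {var varsort index bindex opsym}

/-- The projection from quasiterms to terms. -/
def tmk : QTerm var varsort index bindex opsym → Term var varsort index bindex opsym :=
  Quot.mk _

/-- The projection from quasiabstractions to abstractions. -/
def amk : QAbs var varsort index bindex opsym → Abstr var varsort index bindex opsym :=
  Quot.mk _

/-- A representative of a term. -/
noncomputable def trep (X : Term var varsort index bindex opsym) :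
    QTerm var varsort index bindex opsym := Quot.out X

/-- A representative of an abstraction. -/
noncomputable def arep (A : Abstr var varsort index bindex opsym) :
    QAbs var varsort index bindex opsym := Quot.out A

/-- Good terms. -/
def good (X : Term var varsort index bindex opsym) : Prop := QGood (trep X)

/-- Good abstractions. -/
def goodAbs (A : Abstr var varsort index bindex opsym) : Prop := QGoodAbs (arep A)

/-- The variable-injection constructor on terms. -/
def Var (xs : varsort) (x : var) : Term var varsort index bindex opsym :=
  tmk (.qVar xs x)

/-- The operation constructor on terms. -/
noncomputable def Op (d : opsym) (inp : Input index (Term var varsort index bindex opsym))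
    (binp : Input bindex (Abstr var varsort index bindex opsym)) :
    Term var varsort index bindex opsym :=
  tmk (.qOp d (liftF trep inp) (liftF arep binp))

/-- The abstraction constructor. -/
noncomputable def Abs (xs : varsort) (x : var) (X : Term var varsort index bindex opsym) :
    Abstr var varsort index bindex opsym :=
  amk (.qAbs xs x (trep X))

/-- Freshness on terms. -/
def fresh (ys : varsort) (y : var) (X : Term var varsort index bindex opsym) : Prop :=
  QFresh ys y (trep X)

/-- Freshness on abstractions. -/
def freshAbs (ys : varsort) (y : var) (A : Abstr var varsort index bindex opsym) : Prop :=
  QFreshAbs ys y (arep A)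

/-- Swapping on terms. -/
noncomputable def tswap (X : Term var varsort index bindex opsym)
    (z1 z2 : var) (zs : varsort) : Term var varsort index bindex opsym :=
  tmk (qSwap z1 z2 zs (trep X))

/-! ### Substitution -/

mutual
/-- The graph of capture-avoiding substitution on quasiterms:
`QSubst X Y y ys Z` means that `Z` is a result of substituting `Y` for the free
occurrences of the variable `y` of varsort `ys` in `X` (along a capture-free
representative). -/
inductive QSubst : QTerm var varsort index bindex opsym →
    QTerm var varsort index bindex opsym → var → varsort →
    QTerm var varsort index bindex opsym → Prop where
  | var_eq : ∀ {Y y ys}, QSubst (.qVar ys y) Y y ys Y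
  | var_ne : ∀ {Y y ys xs x}, (xs, x) ≠ (ys, y) → QSubst (.qVar xs x) Y y ys (.qVar xs x)
  | op : ∀ {Y y ys d inp binp inp' binp'},
      (∀ i, inp i = none ↔ inp' i = none) →
      (∀ i X X', inp i = some X → inp' i = some X' → QSubst X Y y ys X') →
      (∀ j, binp j = none ↔ binp' j = none) →
      (∀ j A A', binp j = some A → binp' j = some A' → QSubstAbs A Y y ys A') →
      QSubst (.qOp d inp binp) Y y ys (.qOp d inp' binp')
/-- The graph of capture-avoiding substitution on quasiabstractions. -/
inductive QSubstAbs : QAbs var varsort index bindex opsym →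
    QTerm var varsort index bindex opsym → var → varsort →
    QAbs var varsort index bindex opsym → Prop where
  | abs : ∀ {Y y ys xs x X X'}, (xs, x) ≠ (ys, y) → QFresh xs x Y →
      QSubst X Y y ys X' → QSubstAbs (.qAbs xs x X) Y y ys (.qAbs xs x X')
end

/-- The graph of capture-avoiding substitution on terms. -/
def SubstRel (X Y : Term var varsort index bindex opsym) (y : var) (ys : varsort)
    (Z : Term var varsort index bindex opsym) : Prop :=
  ∃ qX qZ, tmk qX = X ∧ tmk qZ = Z ∧ QSubst qX (trep Y) y ys qZ

/-- Capture-avoiding substitution on terms: `subst X Y y ys` is `X[Y/y]_ys`. -/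
noncomputable def subst (X Y : Term var varsort index bindex opsym)
    (y : var) (ys : varsort) : Term var varsort index bindex opsym :=
  if h : ∃ Z, SubstRel X Y y ys Z then h.choose else X

/-- The graph of capture-avoiding substitution on abstractions. -/
def SubstAbsRel (A : Abstr var varsort index bindex opsym)
    (Y : Term var varsort index bindex opsym) (y : var) (ys : varsort)
    (B : Abstr var varsort index bindex opsym) : Prop :=
  ∃ qA qB, amk qA = A ∧ amk qB = B ∧ QSubstAbs qA (trep Y) y ys qB

/-- Capture-avoiding substitution on abstractions: `substAbs A Y y ys` is `A[Y/y]_ys`. -/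
noncomputable def substAbs (A : Abstr var varsort index bindex opsym)
    (Y : Term var varsort index bindex opsym) (y : var) (ys : varsort) :
    Abstr var varsort index bindex opsym :=
  if h : ∃ B, SubstAbsRel A Y y ys B then h.choose else A

/-! ### Parallel substitution -/

mutual
/-- The graph of capture-avoiding parallel substitution on quasiterms, along an
assignment `ρ : varsort → var → Option qterm`. -/
inductive QPSubst : QTerm var varsort index bindex opsym →
    (varsort → var → Option (QTerm var varsort index bindex opsym)) →
    QTerm var varsort index bindex opsym → Prop where
  | var_some : ∀ {ρ xs x Y}, ρ xs x = some Y → QPSubst (.qVar xs x) ρ Y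
  | var_none : ∀ {ρ xs x}, ρ xs x = none → QPSubst (.qVar xs x) ρ (.qVar xs x)
  | op : ∀ {ρ d inp binp inp' binp'},
      (∀ i, inp i = none ↔ inp' i = none) →
      (∀ i X X', inp i = some X → inp' i = some X' → QPSubst X ρ X') →
      (∀ j, binp j = none ↔ binp' j = none) →
      (∀ j A A', binp j = some A → binp' j = some A' → QPSubstAbs A ρ A') →
      QPSubst (.qOp d inp binp) ρ (.qOp d inp' binp')
/-- The graph of capture-avoiding parallel substitution on quasiabstractions. -/
inductive QPSubstAbs : QAbs var varsort index bindex opsym →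
    (varsort → var → Option (QTerm var varsort index bindex opsym)) →
    QAbs var varsort index bindex opsym → Prop where
  | abs : ∀ {ρ xs x X X'}, ρ xs x = none →
      (∀ ys y Y, ρ ys y = some Y → QFresh xs x Y) →
      QPSubst X ρ X' → QPSubstAbs (.qAbs xs x X) ρ (.qAbs xs x X')
end

/-- Turning a term-valued assignment into a quasiterm-valued one, by picking
representatives. -/
noncomputable def qassign (ρ : varsort → var → Option (Term var varsort index bindex opsym)) :
    varsort → var → Option (QTerm var varsort index bindex opsym) :=
  fun xs x => (ρ xs x).map trep

/-- The graph of parallel substitution on terms. -/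
def PSubstRel (X : Term var varsort index bindex opsym)
    (ρ : varsort → var → Option (Term var varsort index bindex opsym))
    (Z : Term var varsort index bindex opsym) : Prop :=
  ∃ qX qZ, tmk qX = X ∧ tmk qZ = Z ∧ QPSubst qX (qassign ρ) qZ

/-- Capture-avoiding parallel substitution on terms: `psubst X ρ` is `X[ρ]`. -/
noncomputable def psubst (X : Term var varsort index bindex opsym)
    (ρ : varsort → var → Option (Term var varsort index bindex opsym)) :
    Term var varsort index bindex opsym :=
  if h : ∃ Z, PSubstRel X ρ Z then h.choose else X

/-- The graph of parallel substitution on abstractions. -/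
def PSubstAbsRel (A : Abstr var varsort index bindex opsym)
    (ρ : varsort → var → Option (Term var varsort index bindex opsym))
    (B : Abstr var varsort index bindex opsym) : Prop :=
  ∃ qA qB, amk qA = A ∧ amk qB = B ∧ QPSubstAbs qA (qassign ρ) qB

/-- Capture-avoiding parallel substitution on abstractions. -/
noncomputable def psubstAbs (A : Abstr var varsort index bindex opsym)
    (ρ : varsort → var → Option (Term var varsort index bindex opsym)) :
    Abstr var varsort index bindex opsym :=
  if h : ∃ B, PSubstAbsRel A ρ B then h.choose else A

/-- Update of a valuation at a (varsort, variable) point. -/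
noncomputable def updVal {Dt : Type u} (ρ : varsort → var → Dt)
    (xs : varsort) (x : var) (d : Dt) : varsort → var → Dt :=
  fun ys y => if (ys, y) = (xs, x) then d else ρ ys y

/-! ### Helper material -/

local notation "QT" => QTerm var varsort index bindex opsym
local notation "QA" => QAbs var varsort index bindex opsym

theorem q_induct {P : QT → Prop} {Q : QA → Prop}
    (hv : ∀ xs x, P (.qVar xs x))
    (ho : ∀ d inp binp, (∀ i X, inp i = some X → P X) → (∀ j A, binp j = some A → Q A) →
      P (.qOp d inp binp))
    (ha : ∀ xs x X, P X → Q (.qAbs xs x X)) : (∀ X, P X) ∧ ∀ A, Q A := by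
  have key : ∀ X, P X := by
    intro X
    refine QTerm.rec (motive_1 := P) (motive_2 := Q)
      (motive_3 := fun o => ∀ X, o = some X → P X)
      (motive_4 := fun o => ∀ A, o = some A → Q A) hv ho ha ?_ ?_ ?_ ?_ X
    · intro X h; cases h
    · intro X hX Y h; cases h; exact hX
    · intro X h; cases h
    · intro X hX Y h; cases h; exact hX
  refine ⟨key, ?_⟩
  rintro ⟨xs, x, X⟩
  exact ha _ _ _ (key X)

theorem opt_map_congr {α β γ : Type u} {f : α → γ} {g : β → γ} {o : Option α} {o' : Option β}
    (h : o = none ↔ o' = none) (h2 : ∀ a b, o = some a → o' = some b → f a = g b) :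
    o.map f = o'.map g := by
  cases o <;> cases o' <;> simp_all

/-- Renaming of all variables (including binding positions). -/
noncomputable def qRen (f : varsort → var → var) : QT → QT :=
  QTerm.rec (motive_1 := fun _ => QT) (motive_2 := fun _ => QA)
    (motive_3 := fun _ => Option QT) (motive_4 := fun _ => Option QA)
    (fun xs x => .qVar xs (f xs x))
    (fun d _ _ rinp rbinp => .qOp d rinp rbinp)
    (fun xs x _ rX => .qAbs xs (f xs x) rX)
    none (fun _ r => some r) none (fun _ r => some r)

/-- Renaming in quasiabstractions. -/
noncomputable def qRenAbs (f : varsort → var → var) : QA → QA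
  | .qAbs xs x X => .qAbs xs (f xs x) (qRen f X)

theorem qRen_op (f : varsort → var → var) (d : opsym) (inp : index → Option QT)
    (binp : bindex → Option QA) :
    qRen f (.qOp d inp binp) =
      .qOp d (fun i => (inp i).map (qRen f)) (fun j => (binp j).map (qRenAbs f)) := by
  unfold qRen
  dsimp only
  congr 1
  · funext i
    cases inp i <;> rfl
  · funext j
    rcases binp j with _ | ⟨xs, x, X⟩ <;> rfl

theorem qRen_var (f : varsort → var → var) (xs : varsort) (x : var) :
    qRen f (.qVar xs x : QT) = .qVar xs (f xs x) := rfl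

theorem qSwap_eq (z1 z2 : var) (zs : varsort) (X : QT) :
    qSwap z1 z2 zs X = qRen (fun xs => swapVarS var varsort zs xs z1 z2) X := rfl

theorem swapVarS_inj (zs xs : varsort) (z1 z2 : var) :
    Function.Injective (swapVarS var varsort zs xs z1 z2) := by
  intro a b h
  unfold swapVarS swapVar at h
  grind

/-- All variables occurring in a quasiterm. -/
noncomputable def qVars : QT → Set (varsort × var) :=
  QTerm.rec (motive_1 := fun _ => Set (varsort × var)) (motive_2 := fun _ => Set (varsort × var))
    (motive_3 := fun _ => Set (varsort × var)) (motive_4 := fun _ => Set (varsort × var))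
    (fun xs x => {(xs, x)})
    (fun _ _ _ r rb => (⋃ i, r i) ∪ ⋃ j, rb j)
    (fun xs x _ r => insert (xs, x) r)
    ∅ (fun _ r => r) ∅ (fun _ r => r)

/-- All variables occurring in a quasiabstraction. -/
noncomputable def qVarsAbs : QA → Set (varsort × var)
  | .qAbs xs x X => insert (xs, x) (qVars X)

theorem qVars_var (xs : varsort) (x : var) : qVars (.qVar xs x : QT) = {(xs, x)} := rfl

theorem qVars_op (d : opsym) (inp : index → Option QT) (binp : bindex → Option QA) :
    qVars (.qOp d inp binp) =
      (⋃ i, (inp i).elim ∅ qVars) ∪ ⋃ j, (binp j).elim ∅ qVarsAbs := by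
  unfold qVars
  dsimp only
  congr 1
  · congr 1
    funext i
    cases inp i <;> rfl
  · congr 1
    funext j
    rcases binp j with _ | ⟨xs, x, X⟩ <;> rfl

theorem qVars_sub {d : opsym} {inp : index → Option QT} {binp : bindex → Option QA}
    {i : index} {X : QT} (h : inp i = some X) : qVars X ⊆ qVars (.qOp d inp binp) := by
  intro p hp
  rw [qVars_op]
  refine Or.inl (Set.mem_iUnion.2 ⟨i, ?_⟩)
  rw [h]; exact hp

theorem qVars_subAbs {d : opsym} {inp : index → Option QT} {binp : bindex → Option QA}
    {j : bindex} {A : QA} (h : binp j = some A) : qVarsAbs A ⊆ qVars (.qOp d inp binp) := by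
  intro p hp
  rw [qVars_op]
  refine Or.inr (Set.mem_iUnion.2 ⟨j, ?_⟩)
  rw [h]; exact hp

theorem qFresh_of_not_mem (ys : varsort) (y : var) :
    (∀ X : QT, (ys, y) ∉ qVars X → QFresh ys y X) ∧
    (∀ A : QA, (ys, y) ∉ qVarsAbs A → QFreshAbs ys y A) := by
  apply q_induct
  · intro xs x h
    exact .qVar h
  · intro d inp binp h1 h2 h
    exact .qOp (fun i X hi => h1 i X hi fun hm => h (qVars_sub hi hm))
      (fun j A hj => h2 j A hj fun hm => h (qVars_subAbs hj hm))
  · intro xs x X h1 h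
    exact .qAbs_body (h1 fun hm => h (Set.mem_insert_of_mem _ hm))

theorem qRen_congr (f g : varsort → var → var) :
    (∀ X : QT, (∀ xs x, (xs, x) ∈ qVars X → f xs x = g xs x) → qRen f X = qRen g X) ∧
    (∀ A : QA, (∀ xs x, (xs, x) ∈ qVarsAbs A → f xs x = g xs x) → qRenAbs f A = qRenAbs g A) := by
  apply q_induct
  · intro xs x h
    rw [qRen_var, qRen_var, h xs x rfl]
  · intro d inp binp h1 h2 h
    rw [qRen_op, qRen_op]
    congr 1
    · funext i
      refine opt_map_congr Iff.rfl fun a b ha hb => ?_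
      obtain rfl : a = b := by simpa using ha.symm.trans hb
      exact h1 i a ha fun xs x hx => h xs x (qVars_sub ha hx)
    · funext i
      refine opt_map_congr Iff.rfl fun a b ha hb => ?_
      obtain rfl : a = b := by simpa using ha.symm.trans hb
      exact h2 i a ha fun xs x hx => h xs x (qVars_subAbs ha hx)
  · intro xs x X h1 h
    simp only [qRenAbs]
    rw [h xs x (Set.mem_insert _ _), h1 fun xs x hx => h xs x (Set.mem_insert_of_mem _ hx)]

theorem qRen_comp (f g : varsort → var → var) :
    (∀ X : QT, qRen f (qRen g X) = qRen (fun xs x => f xs (g xs x)) X) ∧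
    (∀ A : QA, qRenAbs f (qRenAbs g A) = qRenAbs (fun xs x => f xs (g xs x)) A) := by
  apply q_induct
  · intro xs x
    rfl
  · intro d inp binp h1 h2
    rw [qRen_op, qRen_op, qRen_op]
    congr 1
    · funext i
      rw [Option.map_map]
      refine opt_map_congr Iff.rfl fun a b ha hb => ?_
      obtain rfl : a = b := by simpa using ha.symm.trans hb
      exact h1 i a ha
    · funext i
      rw [Option.map_map]
      refine opt_map_congr Iff.rfl fun a b ha hb => ?_
      obtain rfl : a = b := by simpa using ha.symm.trans hb
      exact h2 i a ha
  · intro xs x X h1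
    simp only [qRenAbs]
    rw [h1]

theorem qFresh_ren (f : varsort → var → var) (hf : ∀ xs, Function.Injective (f xs))
    (ys : varsort) (y : var) :
    (∀ X : QT, QFresh ys y X → QFresh ys (f ys y) (qRen f X)) ∧
    (∀ A : QA, QFreshAbs ys y A → QFreshAbs ys (f ys y) (qRenAbs f A)) := by
  apply q_induct
  · intro xs x h
    cases h with | qVar h =>
    refine .qVar fun he => h ?_
    obtain ⟨h1, h2⟩ := Prod.mk.inj he
    subst h1
    rw [hf _ h2]
  · intro d inp binp h1 h2 h
    cases h with | qOp ha hb =>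
    rw [qRen_op]
    refine .qOp (fun i X hi => ?_) (fun j A hj => ?_)
    · obtain ⟨X0, h0, rfl⟩ := Option.map_eq_some_iff.1 hi
      exact h1 i X0 h0 (ha i X0 h0)
    · obtain ⟨X0, h0, rfl⟩ := Option.map_eq_some_iff.1 hj
      exact h2 j X0 h0 (hb j X0 h0)
  · intro xs x X h1 h
    cases h with
    | qAbs_bound => exact .qAbs_bound
    | qAbs_body h => exact .qAbs_body (h1 h)

theorem smallDom_of {α β γ : Type u} {inp : Input α β} {inp' : Input α γ}
    (h : ∀ a, inp a = none ↔ inp' a = none) (hs : smallDom var inp) : smallDom var inp' := by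
  have : idom inp' = idom inp := by
    ext a
    exact not_congr (h a).symm
  unfold smallDom
  rw [this]
  exact hs

theorem qGood_ren (f : varsort → var → var) :
    (∀ X : QT, QGood X → QGood (qRen f X)) ∧
    (∀ A : QA, QGoodAbs A → QGoodAbs (qRenAbs f A)) := by
  apply q_induct
  · intro xs x h
    exact .qVar
  · intro d inp binp h1 h2 h
    cases h with | qOp ha hb hs hs' =>
    rw [qRen_op]
    refine .qOp (fun i X hi => ?_) (fun j A hj => ?_) (smallDom_of (fun a => ?_) hs)
      (smallDom_of (fun a => ?_) hs')
    · obtain ⟨X0, h0, rfl⟩ := Option.map_eq_some_iff.1 hi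
      exact h1 i X0 h0 (ha i X0 h0)
    · obtain ⟨X0, h0, rfl⟩ := Option.map_eq_some_iff.1 hj
      exact h2 j X0 h0 (hb j X0 h0)
    · simp
    · simp
  · intro xs x X h1 h
    cases h with | qAbs h =>
    exact .qAbs (h1 h)

theorem qVars_small (hreg : (Cardinal.mk var).IsRegular) :
    (∀ X : QT, QGood X → Cardinal.mk (qVars X) < Cardinal.mk var) ∧
    (∀ A : QA, QGoodAbs A → Cardinal.mk (qVarsAbs A) < Cardinal.mk var) := by
  have hinf := hreg.aleph0_le
  apply q_induct
  · intro xs x h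
    rw [qVars_var, Cardinal.mk_singleton]
    exact Cardinal.one_lt_aleph0.trans_le hinf
  · intro d inp binp h1 h2 h
    cases h with | qOp ha hb hs hs' =>
    have e1 : (⋃ i, (inp i).elim ∅ qVars) = ⋃ i ∈ idom inp, (inp i).elim ∅ qVars := by
      ext p
      simp only [Set.mem_iUnion, idom, Set.mem_setOf_eq, exists_prop]
      refine exists_congr fun i => ⟨fun hp => ⟨fun h0 => ?_, hp⟩, fun hp => hp.2⟩
      rw [h0] at hp; exact hp
    have e2 : (⋃ i, (binp i).elim ∅ qVarsAbs) = ⋃ i ∈ idom binp, (binp i).elim ∅ qVarsAbs := by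
      ext p
      simp only [Set.mem_iUnion, idom, Set.mem_setOf_eq, exists_prop]
      refine exists_congr fun i => ⟨fun hp => ⟨fun h0 => ?_, hp⟩, fun hp => hp.2⟩
      rw [h0] at hp; exact hp
    rw [qVars_op, e1, e2]
    refine (Cardinal.mk_union_le _ _).trans_lt (Cardinal.add_lt_of_lt hinf ?_ ?_)
    · refine (Cardinal.card_biUnion_lt_iff_forall_of_isRegular hreg hs).2 fun i hi => ?_
      obtain ⟨X, hX⟩ := Option.ne_none_iff_exists'.1 hi
      rw [hX]
      exact h1 i X hX (ha i X hX)
    · refine (Cardinal.card_biUnion_lt_iff_forall_of_isRegular hreg hs').2 fun i hi => ?_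
      obtain ⟨X, hX⟩ := Option.ne_none_iff_exists'.1 hi
      rw [hX]
      exact h2 i X hX (hb i X hX)
  · intro xs x X h1 h
    cases h with | qAbs h =>
    exact Cardinal.mk_insert_le.trans_lt (Cardinal.add_lt_of_lt hinf (h1 h)
      (Cardinal.one_lt_aleph0.trans_le hinf))

theorem exists_not_mem {S : Set (varsort × var)} (hS : Cardinal.mk S < Cardinal.mk var)
    (xs : varsort) : ∃ y, (xs, y) ∉ S := by
  by_contra hc
  push Not at hc
  refine hS.not_ge ?_
  refine Cardinal.mk_le_of_injective (f := fun y => (⟨(xs, y), hc y⟩ : S)) ?_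
  intro a b h
  simpa using h

theorem alpha_ren (f : varsort → var → var) (hf : ∀ xs, Function.Injective (f xs))
    {X X' : QT} (h : Alpha X X') : Alpha (qRen f X) (qRen f X') := by
  refine Alpha.rec (motive_1 := fun X X' _ => Alpha (qRen f X) (qRen f X'))
    (motive_2 := fun A A' _ => AlphaAbs (qRenAbs f A) (qRenAbs f A')) ?_ ?_ ?_ h
  · intro xs x
    exact .qVar
  · intro d inp binp inp' binp' h1 _ h3 _ h2 h4
    rw [qRen_op, qRen_op]
    refine .qOp (fun i => ?_) (fun i X X' hX hX' => ?_) (fun i => ?_) (fun i X X' hX hX' => ?_)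
    · simpa using h1 i
    · obtain ⟨Z, hZ, rfl⟩ := Option.map_eq_some_iff.1 hX
      obtain ⟨Z', hZ', rfl⟩ := Option.map_eq_some_iff.1 hX'
      exact h2 i Z Z' hZ hZ'
    · simpa using h3 i
    · obtain ⟨Z, hZ, rfl⟩ := Option.map_eq_some_iff.1 hX
      obtain ⟨Z', hZ', rfl⟩ := Option.map_eq_some_iff.1 hX'
      exact h4 i Z Z' hZ hZ'
  · intro xs x x' X X' y hy hX hX' _ ih
    have key : ∀ (u : var) (W : QT), qSwap (f xs y) (f xs u) xs (qRen f W)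
        = qRen f (qSwap y u xs W) := by
      intro u W
      rw [qSwap_eq, qSwap_eq, (qRen_comp _ _).1, (qRen_comp _ _).1]
      refine (qRen_congr _ _).1 _ fun zs z _ => ?_
      have := hf xs
      have i1 : f xs z = f xs y ↔ z = y := this.eq_iff
      have i2 : f xs z = f xs u ↔ z = u := this.eq_iff
      unfold swapVarS swapVar
      by_cases hz : zs = xs
      · subst hz
        simp only [if_true, i1, i2]
        split_ifs <;> rfl
      · simp only [if_neg hz]
    refine .qAbs (y := f xs y) ?_ ((qFresh_ren f hf xs y).1 _ hX)
      ((qFresh_ren f hf xs y).1 _ hX') ?_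
    · simpa [(hf xs).eq_iff] using hy
    · rw [key, key]
      exact ih

theorem qSubst_exists (hreg : (Cardinal.mk var).IsRegular) (Y : QT) (hY : QGood Y)
    (y : var) (ys : varsort) :
    (∀ X : QT, QGood X → ∀ f, ∃ X' Z, QGood X' ∧ Alpha (qRen f X) X' ∧ QSubst X' Y y ys Z) ∧
    (∀ A : QA, QGoodAbs A → ∀ f, ∃ A' B, QGoodAbs A' ∧ AlphaAbs (qRenAbs f A) A' ∧
      QSubstAbs A' Y y ys B) := by
  have hinf := hreg.aleph0_le
  apply q_induct
  · intro xs x _ f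
    by_cases h : (xs, f xs x) = (ys, y)
    · obtain ⟨h1, h2⟩ := Prod.mk.inj h
      refine ⟨.qVar ys y, Y, .qVar, ?_, .var_eq⟩
      subst h1
      rw [qRen_var, h2]
      exact .qVar
    · exact ⟨.qVar xs (f xs x), _, .qVar, .qVar, .var_ne h⟩
  · intro d inp binp h1 h2 h f
    cases h with | qOp ha hb hs hs' =>
    have k1 : ∀ i, ∃ o o' : Option QT, (inp i = none ↔ o = none) ∧ (o = none ↔ o' = none) ∧
        (∀ X, o = some X → QGood X) ∧
        (∀ X X', inp i = some X → o = some X' → Alpha (qRen f X) X') ∧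
        (∀ X X', o = some X → o' = some X' → QSubst X Y y ys X') := by
      intro i
      cases hi : inp i with
      | none => exact ⟨none, none, by simp, by simp, by simp, by simp, by simp⟩
      | some X =>
        obtain ⟨X', Z, q1, q2, q3⟩ := h1 i X hi (ha i X hi) f
        refine ⟨some X', some Z, by simp, by simp, ?_, ?_, ?_⟩
        · rintro _ ⟨⟩; exact q1
        · rintro _ _ ⟨⟩ ⟨⟩; exact q2
        · rintro _ _ ⟨⟩ ⟨⟩; exact q3
    have k2 : ∀ i, ∃ o o' : Option QA, (binp i = none ↔ o = none) ∧ (o = none ↔ o' = none) ∧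
        (∀ X, o = some X → QGoodAbs X) ∧
        (∀ X X', binp i = some X → o = some X' → AlphaAbs (qRenAbs f X) X') ∧
        (∀ X X', o = some X → o' = some X' → QSubstAbs X Y y ys X') := by
      intro i
      cases hi : binp i with
      | none => exact ⟨none, none, by simp, by simp, by simp, by simp, by simp⟩
      | some X =>
        obtain ⟨X', Z, q1, q2, q3⟩ := h2 i X hi (hb i X hi) f
        refine ⟨some X', some Z, by simp, by simp, ?_, ?_, ?_⟩
        · rintro _ ⟨⟩; exact q1
        · rintro _ _ ⟨⟩ ⟨⟩; exact q2
        · rintro _ _ ⟨⟩ ⟨⟩; exact q3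
    choose o o' a1 a2 a3 a4 a5 using k1
    choose p p' b1 b2 b3 b4 b5 using k2
    refine ⟨.qOp d o p, .qOp d o' p', .qOp a3 b3 (smallDom_of a1 hs) (smallDom_of b1 hs'), ?_,
      .op a2 a5 b2 b5⟩
    rw [qRen_op]
    refine .qOp (fun i => ?_) (fun i X X' hX hX' => ?_) (fun i => ?_) (fun i X X' hX hX' => ?_)
    · simpa using a1 i
    · obtain ⟨Z, hZ, rfl⟩ := Option.map_eq_some_iff.1 hX
      exact a4 i Z X' hZ hX'
    · simpa using b1 i
    · obtain ⟨Z, hZ, rfl⟩ := Option.map_eq_some_iff.1 hX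
      exact b4 i Z X' hZ hX'
  · intro xs x X h1 h f
    cases h with | qAbs hX =>
    have s1 := (qVars_small hreg).1 _ ((qGood_ren f).1 X hX)
    have s2 := (qVars_small hreg).1 _ hY
    have one := Cardinal.one_lt_aleph0.trans_le hinf
    -- the new bound variable
    obtain ⟨v, hv⟩ : ∃ v, (xs, v) ∉ insert (xs, f xs x) (insert (ys, y)
        (qVars (qRen f X) ∪ qVars Y)) := by
      apply exists_not_mem
      refine Cardinal.mk_insert_le.trans_lt (Cardinal.add_lt_of_lt hinf ?_ one)
      refine Cardinal.mk_insert_le.trans_lt (Cardinal.add_lt_of_lt hinf ?_ one)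
      exact (Cardinal.mk_union_le _ _).trans_lt (Cardinal.add_lt_of_lt hinf s1 s2)
    simp only [Set.mem_insert_iff, Set.mem_union, not_or] at hv
    obtain ⟨v1, v2, v3, v4⟩ := hv
    obtain ⟨X', Z, g1, g2, g3⟩ := h1 hX
      (fun zs z => swapVarS var varsort xs zs v (f xs x) (f zs z))
    have s3 := (qVars_small hreg).1 _ g1
    obtain ⟨w, hw⟩ : ∃ w, (xs, w) ∉ insert (xs, f xs x) (insert (xs, v)
        (qVars (qRen f X) ∪ qVars X')) := by
      apply exists_not_mem
      refine Cardinal.mk_insert_le.trans_lt (Cardinal.add_lt_of_lt hinf ?_ one)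
      refine Cardinal.mk_insert_le.trans_lt (Cardinal.add_lt_of_lt hinf ?_ one)
      exact (Cardinal.mk_union_le _ _).trans_lt (Cardinal.add_lt_of_lt hinf s1 s3)
    simp only [Set.mem_insert_iff, Set.mem_union, not_or] at hw
    obtain ⟨w1, w2, w3, w4⟩ := hw
    refine ⟨.qAbs xs v X', .qAbs xs v Z, .qAbs g1, ?_,
      .abs v2 ((qFresh_of_not_mem xs v).1 _ v4) g3⟩
    refine .qAbs (y := w) ?_ ((qFresh_of_not_mem xs w).1 _ w3)
      ((qFresh_of_not_mem xs w).1 _ w4) ?_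
    · rintro (h | h)
      · exact w1 (by rw [h])
      · exact w2 (by rw [h])
    · have := alpha_ren (fun zs => swapVarS var varsort xs zs w v)
        (fun zs => swapVarS_inj xs zs w v) g2
      rw [← (qRen_comp (fun zs => swapVarS var varsort xs zs v (f xs x)) f).1,
        (qRen_comp _ _).1] at this
      rw [qSwap_eq, qSwap_eq]
      convert this using 1
      refine (qRen_congr _ _).1 _ fun zs z hz => ?_
      unfold swapVarS swapVar
      by_cases hzs : zs = xs
      · subst hzs
        have z1 : z ≠ v := fun e => v3 (e ▸ hz)
        have z2 : z ≠ w := fun e => w3 (e ▸ hz)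
        simp only [if_true]
        grind
      · simp only [if_neg hzs]

section Sem

variable {Dt Da : Type u} (opI : opsym → Input index Dt → Input bindex Da → Dt)
    (absI : varsort → (Dt → Dt) → Da)

/-- Interpretation of quasiterms. -/
noncomputable def qSem : QT → (varsort → var → Dt) → Dt :=
  QTerm.rec (motive_1 := fun _ => (varsort → var → Dt) → Dt)
    (motive_2 := fun _ => (varsort → var → Dt) → Da)
    (motive_3 := fun _ => (varsort → var → Dt) → Option Dt)
    (motive_4 := fun _ => (varsort → var → Dt) → Option Da)
    (fun xs x ρ => ρ xs x)
    (fun d _ _ r rb ρ => opI d (fun i => r i ρ) (fun j => rb j ρ))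
    (fun xs x _ r ρ => absI xs (fun d => r (updVal ρ xs x d)))
    (fun _ => none) (fun _ r ρ => some (r ρ)) (fun _ => none) (fun _ r ρ => some (r ρ))

/-- Interpretation of quasiabstractions. -/
noncomputable def qSemAbs : QA → (varsort → var → Dt) → Da
  | .qAbs xs x X, ρ => absI xs (fun d => qSem opI absI X (updVal ρ xs x d))

theorem qSem_var (xs : varsort) (x : var) (ρ : varsort → var → Dt) :
    qSem opI absI (.qVar xs x) ρ = ρ xs x := rfl

theorem qSem_op (d : opsym) (inp : index → Option QT) (binp : bindex → Option QA)
    (ρ : varsort → var → Dt) :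
    qSem opI absI (.qOp d inp binp) ρ =
      opI d (fun i => (inp i).map (fun X => qSem opI absI X ρ))
        (fun j => (binp j).map (fun A => qSemAbs opI absI A ρ)) := by
  unfold qSem
  dsimp only
  congr 1
  · funext i
    cases inp i <;> rfl
  · funext j
    rcases binp j with _ | ⟨xs, x, X⟩ <;> rfl

theorem qSem_ren (f : varsort → var → var) (hf : ∀ xs, Function.Injective (f xs)) :
    (∀ (X : QT) (ρ : varsort → var → Dt),
      qSem opI absI (qRen f X) ρ = qSem opI absI X (fun xs x => ρ xs (f xs x))) ∧
    (∀ (A : QA) (ρ : varsort → var → Dt),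
      qSemAbs opI absI (qRenAbs f A) ρ = qSemAbs opI absI A (fun xs x => ρ xs (f xs x))) := by
  apply q_induct
  · intro xs x ρ
    rfl
  · intro d inp binp h1 h2 ρ
    rw [qRen_op, qSem_op, qSem_op]
    congr 1
    · funext i
      rw [Option.map_map]
      refine opt_map_congr Iff.rfl fun a b ha hb => ?_
      obtain rfl : a = b := by simpa using ha.symm.trans hb
      exact h1 i a ha ρ
    · funext i
      rw [Option.map_map]
      refine opt_map_congr Iff.rfl fun a b ha hb => ?_
      obtain rfl : a = b := by simpa using ha.symm.trans hb
      exact h2 i a ha ρ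
  · intro xs x X h1 ρ
    simp only [qRenAbs, qSemAbs]
    congr 1
    funext d
    rw [h1]
    congr 1
    funext zs z
    unfold updVal
    refine if_congr ?_ rfl rfl
    constructor
    · intro he
      obtain ⟨e1, e2⟩ := Prod.mk.inj he
      subst e1
      rw [hf _ e2]
    · intro he
      obtain ⟨e1, e2⟩ := Prod.mk.inj he
      rw [e1, e2]

theorem qSem_fresh (ys : varsort) (y : var) :
    (∀ X : QT, QFresh ys y X → ∀ ρ ρ' : varsort → var → Dt,
      (∀ zs z, (zs, z) ≠ (ys, y) → ρ zs z = ρ' zs z) → qSem opI absI X ρ = qSem opI absI X ρ') ∧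
    (∀ A : QA, QFreshAbs ys y A → ∀ ρ ρ' : varsort → var → Dt,
      (∀ zs z, (zs, z) ≠ (ys, y) → ρ zs z = ρ' zs z) →
      qSemAbs opI absI A ρ = qSemAbs opI absI A ρ') := by
  apply q_induct
  · intro xs x h ρ ρ' hρ
    cases h with | qVar h =>
    exact hρ _ _ h.symm
  · intro d inp binp h1 h2 h ρ ρ' hρ
    cases h with | qOp ha hb =>
    rw [qSem_op, qSem_op]
    congr 1
    · funext i
      refine opt_map_congr Iff.rfl fun a b ha' hb' => ?_
      obtain rfl : a = b := by simpa using ha'.symm.trans hb'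
      exact h1 i a ha' (ha i a ha') ρ ρ' hρ
    · funext i
      refine opt_map_congr Iff.rfl fun a b ha' hb' => ?_
      obtain rfl : a = b := by simpa using ha'.symm.trans hb'
      exact h2 i a ha' (hb i a ha') ρ ρ' hρ
  · intro xs x X h1 h ρ ρ' hρ
    simp only [qSemAbs]
    congr 1
    funext d
    cases h with
    | qAbs_bound =>
      congr 1
      funext zs z
      unfold updVal
      split_ifs with hz
      · rfl
      · exact hρ _ _ hz
    | qAbs_body h =>
      refine h1 h _ _ fun zs z hz => ?_
      unfold updVal
      rw [hρ _ _ hz]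

theorem qSem_alpha_both :
    (∀ X X' : QT, Alpha X X' → qSem opI absI X = qSem opI absI X') ∧
    (∀ A A' : QA, AlphaAbs A A' → qSemAbs opI absI A = qSemAbs opI absI A') := by
  have aux : ∀ (xs : varsort) (x y : var) (X : QT) (d : Dt) (ρ : varsort → var → Dt),
      y ≠ x → QFresh xs y X → qSem opI absI X (updVal ρ xs x d) =
        qSem opI absI (qSwap y x xs X) (updVal ρ xs y d) := by
    intro xs x y X d ρ hyx hX
    rw [qSwap_eq, (qSem_ren opI absI _ fun zs => swapVarS_inj xs zs y x).1]
    refine (qSem_fresh opI absI xs y).1 X hX _ _ fun zs z hz => ?_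
    unfold updVal swapVarS swapVar
    by_cases hzs : zs = xs
    · subst hzs
      have : z ≠ y := fun e => hz (by rw [e])
      simp only [if_true, Prod.mk.injEq, true_and]
      grind
    · simp [hzs]
  have var_case : ∀ (xs : varsort) (x : var),
      qSem opI absI (.qVar xs x : QT) = qSem opI absI (.qVar xs x) := fun _ _ => rfl
  have abs_case : ∀ (xs : varsort) (x x' : var) (X X' : QT) (y : var),
      y ∉ ({x, x'} : Set var) → QFresh xs y X → QFresh xs y X' →
      qSem opI absI (qSwap y x xs X) = qSem opI absI (qSwap y x' xs X') →
      qSemAbs opI absI (.qAbs xs x X) = qSemAbs opI absI (.qAbs xs x' X') := by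
    intro xs x x' X X' y hy hX hX' ih
    simp only [Set.mem_insert_iff, Set.mem_singleton_iff, not_or] at hy
    funext ρ
    simp only [qSemAbs]
    congr 1
    funext d
    rw [aux xs x y X d ρ hy.1 hX, aux xs x' y X' d ρ hy.2 hX', ih]
  have key : ∀ X X' : QT, Alpha X X' → qSem opI absI X = qSem opI absI X' := by
    intro X X' h
    refine Alpha.rec (motive_1 := fun X X' _ => qSem opI absI X = qSem opI absI X')
      (motive_2 := fun A A' _ => qSemAbs opI absI A = qSemAbs opI absI A') ?_ ?_ ?_ h
    · intro xs x
      rfl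
    · intro d inp binp inp' binp' h1 _ h3 _ h2 h4
      funext ρ
      rw [qSem_op, qSem_op]
      congr 1
      · funext i
        exact opt_map_congr (h1 i) fun a b ha hb => by rw [h2 i a b ha hb]
      · funext i
        exact opt_map_congr (h3 i) fun a b ha hb => by rw [h4 i a b ha hb]
    · intro xs x x' X X' y hy hX hX' _ ih
      exact abs_case xs x x' X X' y hy hX hX' ih
  refine ⟨key, ?_⟩
  intro A A' h
  cases h with | qAbs hy hX hX' hA =>
  exact abs_case _ _ _ _ _ _ hy hX hX' (key _ _ hA)

theorem qSem_subst {X Y Z : QT} {y : var} {ys : varsort} (h : QSubst X Y y ys Z)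
    (ρ : varsort → var → Dt) :
    qSem opI absI Z ρ = qSem opI absI X (updVal ρ ys y (qSem opI absI Y ρ)) := by
  revert ρ
  refine QSubst.rec
    (motive_1 := fun X Y y ys Z _ => ∀ ρ : varsort → var → Dt,
      qSem opI absI Z ρ = qSem opI absI X (updVal ρ ys y (qSem opI absI Y ρ)))
    (motive_2 := fun X Y y ys Z _ => ∀ ρ : varsort → var → Dt,
      qSemAbs opI absI Z ρ = qSemAbs opI absI X (updVal ρ ys y (qSem opI absI Y ρ)))
    ?_ ?_ ?_ ?_ h
  · intro Y y ys ρ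
    rw [qSem_var]
    simp [updVal]
  · intro Y y ys xs x hne ρ
    rw [qSem_var, qSem_var, updVal, if_neg hne]
  · intro Y y ys d inp binp inp' binp' h1 _ h3 _ h2 h4 ρ
    rw [qSem_op, qSem_op]
    congr 1
    · funext i
      exact opt_map_congr (h1 i).symm fun a b ha hb => h2 i b a hb ha ρ
    · funext i
      exact opt_map_congr (h3 i).symm fun a b ha hb => h4 i b a hb ha ρ
  · intro Y y ys xs x X X' hne hf _ ih ρ
    simp only [qSemAbs]
    congr 1
    funext d
    rw [ih]
    have : qSem opI absI Y (updVal ρ xs x d) = qSem opI absI Y ρ := by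
      refine (qSem_fresh opI absI xs x).1 Y hf _ _ fun zs z hz => ?_
      rw [updVal, if_neg hz]
    rw [this]
    congr 1
    funext zs z
    unfold updVal
    by_cases h1 : (zs, z) = (xs, x)
    · rw [if_pos h1, if_pos h1, if_neg (h1 ▸ hne)]
    · rw [if_neg h1, if_neg h1]

end Sem

theorem qRen_id_both :
    (∀ X : QT, qRen (fun _ z => z) X = X) ∧ (∀ A : QA, qRenAbs (fun _ z => z) A = A) := by
  apply q_induct
  · intro xs x
    rfl
  · intro d inp binp h1 h2
    rw [qRen_op]
    congr 1
    · funext i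
      cases hi : inp i with
      | none => rfl
      | some X => simp [h1 i X hi]
    · funext i
      cases hi : binp i with
      | none => rfl
      | some X => simp [h2 i X hi]
  · intro xs x X h1
    simp only [qRenAbs]
    rw [h1]

/-- terms and abstractions are interpretable in any semantic domain
`(Dt, Da, opI, absI)`, compatibly with the constructors; moreover the
interpretation maps substitution to valuation update and interpretation of fresh
variables does not matter. -/
theorem semantic_interpretation (hinf : Cardinal.aleph0 ≤ Cardinal.mk var)
    (hreg : (Cardinal.mk var).IsRegular)
    {Dt Da : Type u}
    (opI : opsym → Input index Dt → Input bindex Da → Dt)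
    (absI : varsort → (Dt → Dt) → Da) :
    ∃ (sem : Term var varsort index bindex opsym → (varsort → var → Dt) → Dt)
      (semAbs : Abstr var varsort index bindex opsym → (varsort → var → Dt) → Da),
      (∀ xs x ρ, sem (Var xs x) ρ = ρ xs x) ∧
      (∀ d inp binp ρ, liftP good inp → liftP goodAbs binp →
        smallDom var inp → smallDom var binp →
        sem (Op d inp binp) ρ =
          opI d (liftF (fun X => sem X ρ) inp) (liftF (fun A => semAbs A ρ) binp)) ∧
      (∀ xs x X ρ, good X →
        semAbs (Abs xs x X) ρ = absI xs (fun d => sem X (updVal ρ xs x d))) ∧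
      (∀ X Y y ys ρ, good X → good Y →
        sem (subst X Y y ys) ρ = sem X (updVal ρ ys y (sem Y ρ))) ∧
      (∀ xs x X, good X → fresh xs x X →
        ∀ ρ ρ', (∀ ys yv, (ys, yv) ≠ (xs, x) → ρ ys yv = ρ' ys yv) →
          sem X ρ = sem X ρ') := by
  have mk_trep : ∀ X : Term var varsort index bindex opsym, tmk (trep X) = X :=
    fun X => Quot.out_eq X
  have mk_arep : ∀ A : Abstr var varsort index bindex opsym, amk (arep A) = A :=
    fun A => Quot.out_eq A
  let sem : Term var varsort index bindex opsym → (varsort → var → Dt) → Dt :=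
    Quot.lift (qSem opI absI) (qSem_alpha_both opI absI).1
  let semAbs : Abstr var varsort index bindex opsym → (varsort → var → Dt) → Da :=
    Quot.lift (qSemAbs opI absI) (qSem_alpha_both opI absI).2
  have sem_mk : ∀ X, sem (tmk X) = qSem opI absI X := fun _ => rfl
  have semAbs_mk : ∀ A, semAbs (amk A) = qSemAbs opI absI A := fun _ => rfl
  have sem_rep : ∀ X, qSem opI absI (trep X) = sem X := fun X => by
    rw [← sem_mk, mk_trep]
  have semAbs_rep : ∀ A, qSemAbs opI absI (arep A) = semAbs A := fun A => by
    rw [← semAbs_mk, mk_arep]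
  refine ⟨sem, semAbs, ?_, ?_, ?_, ?_, ?_⟩
  · intro xs x ρ
    rfl
  · intro d inp binp ρ _ _ _ _
    unfold Op
    rw [sem_mk, qSem_op]
    simp only [liftF, Option.map_map]
    congr 1
    · funext i
      refine opt_map_congr Iff.rfl fun a b ha hb => ?_
      obtain rfl : a = b := by simpa using ha.symm.trans hb
      exact congrFun (sem_rep a) ρ
    · funext i
      refine opt_map_congr Iff.rfl fun a b ha hb => ?_
      obtain rfl : a = b := by simpa using ha.symm.trans hb
      exact congrFun (semAbs_rep a) ρ
  · intro xs x X ρ _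
    unfold Abs
    rw [semAbs_mk]
    simp only [qSemAbs]
    rw [sem_rep]
  · intro X Y y ys ρ hX hY
    have hex : ∃ Z, SubstRel X Y y ys Z := by
      obtain ⟨X', Z, _, h2, h3⟩ := (qSubst_exists hreg (trep Y) hY y ys).1 (trep X) hX
        (fun _ z => z)
      rw [qRen_id_both.1] at h2
      refine ⟨tmk Z, X', Z, ?_, rfl, h3⟩
      rw [← mk_trep X]
      exact (Quot.sound h2).symm
    unfold subst
    rw [dif_pos hex]
    obtain ⟨qX, qZ, e1, e2, hs⟩ := hex.choose_spec
    rw [← e2, ← e1, sem_mk, sem_mk, ← sem_rep Y]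
    exact qSem_subst opI absI hs ρ
  · intro xs x X _ hf ρ ρ' hρ
    rw [← sem_rep X]
    exact (qSem_fresh opI absI xs x).1 _ hf ρ ρ' hρ

end Binding
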